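/- arXiv:1507.06362 — 2 statements merged into one kernel-verified Lean document; each statement's English description precedes it below -/
import Mathlib

section
/- The image of a CO-charming space under a continuous map is CO-charming: if X is a CO-charming space, Z is a topological space, and f : X → Z is a continuous surjection, then Z is CO-charming. -/
open Set Function TopologicalSpace

universe u

/-- A map between topological spaces is *perfect* if it is continuous, closed, and
every fiber is compact. -/
def PerfectMap {Y : Type*} {Z : Type*} [TopologicalSpace Y] [TopologicalSpace Z]
    (f : Y → Z) : Prop :=
  Continuous f ∧ IsClosedMap f ∧ ∀ z : Z, IsCompact (f ⁻¹' {z})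

/-- A topological space `X` is a *Lindelöf Σ-space* if there exist a topological space `Y`,
a continuous surjection from `Y` onto `X`, and a perfect surjection from `Y` onto some
second-countable space. -/
def IsLindelofSigma (X : Type u) [TopologicalSpace X] : Prop :=
  ∃ (Y : Type u) (tY : TopologicalSpace Y) (Z : Type u) (tZ : TopologicalSpace Z),
    @SecondCountableTopology Z tZ ∧
    (∃ f : Y → X, @Continuous Y X tY _ f ∧ Surjective f) ∧
    (∃ g : Y → Z, @PerfectMap Y Z tY tZ g ∧ Surjective g)

/-- A topological space `X` is a *charming space* if there is a subset `Y` of `X` that is a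
Lindelöf Σ-space in the subspace topology and such that for every open `U ⊇ Y`,
the set `X \ U` is a Lindelöf Σ-space in the subspace topology. -/
def IsCharming (X : Type u) [TopologicalSpace X] : Prop :=
  ∃ Y : Set X, IsLindelofSigma Y ∧
    ∀ U : Set X, IsOpen U → Y ⊆ U → IsLindelofSigma ↥(Uᶜ)

/-- A *CL-charming* space: the shell `Y` can be chosen closed. -/
def IsCLCharming (X : Type u) [TopologicalSpace X] : Prop :=
  ∃ Y : Set X, IsClosed Y ∧ IsLindelofSigma Y ∧
    ∀ U : Set X, IsOpen U → Y ⊆ U → IsLindelofSigma ↥(Uᶜ)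

/-- A *CO-charming* space: the shell `Y` can be chosen compact. -/
def IsCOCharming (X : Type u) [TopologicalSpace X] : Prop :=
  ∃ Y : Set X, IsCompact Y ∧ IsLindelofSigma Y ∧
    ∀ U : Set X, IsOpen U → Y ⊆ U → IsLindelofSigma ↥(Uᶜ)

/-- A space has a *countable network* if there is a countable family `N` of subsets such that
every point in every open set `V` is contained in a member of `N` contained in `V`. -/
def HasCountableNetwork (X : Type u) [TopologicalSpace X] : Prop :=
  ∃ N : Set (Set X), N.Countable ∧
    ∀ x : X, ∀ V : Set X, IsOpen V → x ∈ V → ∃ n ∈ N, x ∈ n ∧ n ⊆ V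

/-- A topological space `X` is *weak (4,4)-structured* if there exist a topological space `Y`,
a continuous surjection from `Y` onto `X`, and a perfect surjection from `Y` onto some
charming space. -/
def IsWeak44Structured (X : Type u) [TopologicalSpace X] : Prop :=
  ∃ (Y : Type u) (tY : TopologicalSpace Y) (M : Type u) (tM : TopologicalSpace M),
    @IsCharming M tM ∧
    (∃ f : Y → X, @Continuous Y X tY _ f ∧ Surjective f) ∧
    (∃ g : Y → M, @PerfectMap Y M tY tM g ∧ Surjective g)

theorem IsLindelofSigma.image_aux {A B : Type u} [TopologicalSpace A] [TopologicalSpace B]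
    (hA : IsLindelofSigma A) (g : A → B) (hg : Continuous g) (hs : Surjective g) :
    IsLindelofSigma B := by
  obtain ⟨Y, tY, Z, tZ, h2, ⟨f, hf, hfs⟩, hp⟩ := hA
  exact ⟨Y, tY, Z, tZ, h2, ⟨g ∘ f, hg.comp hf, hs.comp hfs⟩, hp⟩

/-- The image of a CO-charming space under a continuous surjection is CO-charming. -/
theorem continuous_image_of_COCharming {X : Type u} {Z : Type u}
    [TopologicalSpace X] [T35Space X] [TopologicalSpace Z] [T35Space Z]
    (hX : IsCOCharming X) (f : X → Z) (hf : Continuous f) (hsurj : Surjective f) :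
    IsCOCharming Z := by
  obtain ⟨K, hK, hKS, hU⟩ := hX
  refine ⟨f '' K, hK.image hf, ?_, ?_⟩
  · refine hKS.image_aux (fun x : K => (⟨f x, mem_image_of_mem f x.2⟩ : ↥(f '' K))) ?_ ?_
    · exact Continuous.subtype_mk (hf.comp continuous_subtype_val) _
    · rintro ⟨_, x, hx, rfl⟩
      exact ⟨⟨x, hx⟩, rfl⟩
  · intro U hUo hKU
    refine (hU (f ⁻¹' U) (hUo.preimage hf) (image_subset_iff.mp hKU)).image_aux
      (fun x : ↥((f ⁻¹' U)ᶜ) => (⟨f x, x.2⟩ : ↥(Uᶜ))) ?_ ?_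
    · exact Continuous.subtype_mk (hf.comp continuous_subtype_val) _
    · rintro ⟨z, hz⟩
      obtain ⟨x, rfl⟩ := hsurj z
      exact ⟨⟨x, hz⟩, rfl⟩
end

section
/- Every charming rectifiable space has a dense rectifiable subspace that is a Lindelöf Σ-space: if G is a rectifiable space with rectification φ, right neutral element e, and operations p = π₂ ∘ φ⁻¹ and q = π₂ ∘ φ, and G is a charming space, then there exists a dense subset H of G with e ∈ H, p(H × H) ⊆ H and q(H × H) ⊆ H, such that H with the subspace topology is a Lindelöf Σ-space. -/
open Set Function TopologicalSpace

universe u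

theorem perfectMap_iff_isProperMap {Y Z : Type*} [TopologicalSpace Y] [TopologicalSpace Z]
    (f : Y → Z) : PerfectMap f ↔ IsProperMap f :=
  isProperMap_iff_isClosedMap_and_compact_fibers.symm

theorem IsLindelofSigma.of_surj {X X' : Type u} [TopologicalSpace X] [TopologicalSpace X']
    (h : IsLindelofSigma X) (F : X → X') (hF : Continuous F) (hs : Surjective F) :
    IsLindelofSigma X' := by
  obtain ⟨Y, tY, Z, tZ, hZ, ⟨f, hf, hfs⟩, hg⟩ := h
  exact ⟨Y, tY, Z, tZ, hZ, ⟨F ∘ f, hF.comp hf, hs.comp hfs⟩, hg⟩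

theorem IsLindelofSigma.prod_space {X X' : Type u} [TopologicalSpace X] [TopologicalSpace X']
    (h : IsLindelofSigma X) (h' : IsLindelofSigma X') : IsLindelofSigma (X × X') := by
  obtain ⟨Y, tY, Z, tZ, hZ, ⟨f, hf, hfs⟩, ⟨g, hg, hgs⟩⟩ := h
  obtain ⟨Y', tY', Z', tZ', hZ', ⟨f', hf', hfs'⟩, ⟨g', hg', hgs'⟩⟩ := h'
  rw [perfectMap_iff_isProperMap] at hg hg'
  exact ⟨Y × Y', inferInstance, Z × Z', inferInstance, inferInstance,
    ⟨Prod.map f f', hf.prodMap hf', hfs.prodMap hfs'⟩,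
    ⟨Prod.map g g', (perfectMap_iff_isProperMap _).2 (hg.prodMap hg'), hgs.prodMap hgs'⟩⟩

theorem IsLindelofSigma.sigma_space {ι : Type} [Countable ι] {X : ι → Type u}
    [∀ i, TopologicalSpace (X i)] (h : ∀ i, IsLindelofSigma (X i)) :
    IsLindelofSigma (Σ i, X i) := by
  choose Y tY Z tZ hZ hf hg using h
  choose f hf hfs using hf
  choose g hg hgs using hg
  refine ⟨Σ i, Y i, inferInstance, Σ i, Z i, inferInstance, inferInstance,
    ⟨Sigma.map id f, ?_, ?_⟩, ⟨Sigma.map id g, ⟨?_, ?_, ?_⟩, ?_⟩⟩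
  · exact continuous_sigma fun i => continuous_sigmaMk.comp (hf i)
  · rintro ⟨i, x⟩
    obtain ⟨y, rfl⟩ := hfs i x
    exact ⟨⟨i, y⟩, rfl⟩
  · exact continuous_sigma fun i => continuous_sigmaMk.comp (hg i).1
  · intro C hC
    rw [isClosed_sigma_iff] at hC ⊢
    intro i
    have : Sigma.mk i ⁻¹' (Sigma.map id g '' C) = g i '' (Sigma.mk i ⁻¹' C) := by
      ext z
      constructor
      · rintro ⟨⟨j, y⟩, hy, h⟩
        obtain rfl : j = i := congrArg Sigma.fst h
        exact ⟨y, hy, eq_of_heq (Sigma.mk.inj h).2⟩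
      · rintro ⟨y, hy, rfl⟩
        exact ⟨⟨i, y⟩, hy, rfl⟩
    rw [this]
    exact (hg i).2.1 _ (hC i)
  · rintro ⟨i, z⟩
    have : Sigma.map id g ⁻¹' {⟨i, z⟩} = Sigma.mk i '' (g i ⁻¹' {z}) := by
      ext ⟨j, y⟩
      constructor
      · intro h
        obtain rfl : j = i := congrArg Sigma.fst h
        exact ⟨y, eq_of_heq (Sigma.mk.inj h).2, rfl⟩
      · rintro ⟨y', hy, h⟩
        rw [← h]
        have : g i y' = z := hy
        rw [← this]
        rfl
    rw [this]
    exact ((hg i).2.2 z).image continuous_sigmaMk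
  · rintro ⟨i, x⟩
    obtain ⟨y, rfl⟩ := hgs i x
    exact ⟨⟨i, y⟩, rfl⟩

theorem IsLindelofSigma.lindelofSpace {X : Type u} [TopologicalSpace X]
    (h : IsLindelofSigma X) : LindelofSpace X := by
  obtain ⟨Y, tY, Z, tZ, hZ, ⟨f, hf, hfs⟩, ⟨g, hg, hgs⟩⟩ := h
  rw [perfectMap_iff_isProperMap] at hg
  have hY : IsLindelof (univ : Set Y) := by
    intro F hF _ _
    obtain ⟨z, -, hz⟩ := (isLindelof_univ (X := Z)) (f := Filter.map g F) (by simp)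
    obtain ⟨y, -, hy⟩ := hg.clusterPt_of_mapClusterPt hz
    exact ⟨y, mem_univ y, hy⟩
  rw [← isLindelof_univ_iff, ← hfs.range_eq, ← image_univ]
  exact hY.image hf

theorem IsLindelofSigma.isLindelof {X : Type u} [TopologicalSpace X] {S : Set X}
    (h : IsLindelofSigma S) : IsLindelof S := by
  have := h.lindelofSpace
  have h2 := (isLindelof_univ (X := S)).image continuous_subtype_val
  simpa using h2

theorem IsLindelofSigma.iUnion_set {ι : Type} [Countable ι] {X : Type u} [TopologicalSpace X]
    {S : ι → Set X} (h : ∀ i, IsLindelofSigma (S i)) : IsLindelofSigma ↥(⋃ i, S i) := by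
  refine (IsLindelofSigma.sigma_space h).of_surj
    (fun z => ⟨z.2.1, mem_iUnion.2 ⟨z.1, z.2.2⟩⟩) ?_ ?_
  · exact continuous_sigma fun i => by fun_prop
  · rintro ⟨x, hx⟩
    obtain ⟨i, hi⟩ := mem_iUnion.1 hx
    exact ⟨⟨i, ⟨x, hi⟩⟩, rfl⟩

theorem IsLindelofSigma.union_set {X : Type u} [TopologicalSpace X]
    {S T : Set X} (hS : IsLindelofSigma S) (hT : IsLindelofSigma T) :
    IsLindelofSigma ↥(S ∪ T) := by
  rw [union_eq_iUnion]
  exact IsLindelofSigma.iUnion_set (by rintro (_ | _) <;> assumption)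

theorem IsLindelofSigma.image_set {X X' : Type u} [TopologicalSpace X] [TopologicalSpace X']
    {S : Set X} (hS : IsLindelofSigma S) {F : X → X'} (hF : Continuous F) :
    IsLindelofSigma ↥(F '' S) :=
  hS.of_surj (fun x => ⟨F x.1, mem_image_of_mem F x.2⟩) (by fun_prop) (by
    rintro ⟨_, x, hx, rfl⟩
    exact ⟨⟨x, hx⟩, rfl⟩)

theorem IsLindelofSigma.prod_set {X X' : Type u} [TopologicalSpace X] [TopologicalSpace X']
    {S : Set X} {T : Set X'} (hS : IsLindelofSigma S) (hT : IsLindelofSigma T) :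
    IsLindelofSigma ↥(S ×ˢ T) :=
  (hS.prod_space hT).of_surj (fun x => ⟨(x.1.1, x.2.1), x.1.2, x.2.2⟩) (by fun_prop) (by
    rintro ⟨⟨x, y⟩, hx, hy⟩
    exact ⟨(⟨x, hx⟩, ⟨y, hy⟩), rfl⟩)

theorem IsLindelofSigma.singleton_set {X : Type u} [TopologicalSpace X] (x : X) :
    IsLindelofSigma ↥({x} : Set X) := by
  refine ⟨PUnit, inferInstance, PUnit, inferInstance, inferInstance,
    ⟨fun _ => ⟨x, rfl⟩, continuous_const, ?_⟩, ⟨id, ?_, surjective_id⟩⟩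
  · rintro ⟨_, rfl⟩
    exact ⟨PUnit.unit, rfl⟩
  · exact (perfectMap_iff_isProperMap _).2 (Homeomorph.refl PUnit).isProperMap

theorem IsCharming.isLindelof_univ {X : Type u} [TopologicalSpace X] (h : IsCharming X) :
    IsLindelof (univ : Set X) := by
  obtain ⟨Y, hY, hU⟩ := h
  apply isLindelof_of_countable_subcover
  intro ι U hUo hUc
  obtain ⟨r, hr, hrc⟩ := hY.isLindelof.elim_countable_subcover U hUo ((subset_univ _).trans hUc)
  have hc := (hU _ (isOpen_biUnion fun i (_ : i ∈ r) => hUo i) hrc).isLindelof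
  obtain ⟨s, hs, hsc⟩ := hc.elim_countable_subcover U hUo ((subset_univ _).trans hUc)
  refine ⟨r ∪ s, hr.union hs, fun x _ => ?_⟩
  rw [biUnion_union]
  by_cases hx : x ∈ ⋃ i ∈ r, U i
  · exact Or.inl hx
  · exact Or.inr (hsc hx)

/-- Iterated closure of a set under two binary operations. -/
def genStep {G : Type u} (p q : G × G → G) (S : Set G) : ℕ → Set G
  | 0 => S
  | n + 1 => genStep p q S n ∪ (p '' (genStep p q S n ×ˢ genStep p q S n) ∪
      q '' (genStep p q S n ×ˢ genStep p q S n))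

/-- Every charming rectifiable space has a dense rectifiable subspace that is a
Lindelöf Σ-space. -/
theorem charming_rectifiable_dense_lindelofSigma_subspace {G : Type u}
    [TopologicalSpace G] [T35Space G]
    (φ : G × G ≃ₜ G × G) (e : G)
    (hπ : ∀ z : G × G, (φ z).1 = z.1)
    (hφ : ∀ x : G, φ (x, x) = (x, e))
    (p q : G × G → G)
    (hp : p = fun z => (φ.symm z).2)
    (hq : q = fun z => (φ z).2)
    (hG : IsCharming G) :
    ∃ H : Set G, Dense H ∧ e ∈ H ∧
      (∀ x ∈ H, ∀ y ∈ H, p (x, y) ∈ H) ∧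
      (∀ x ∈ H, ∀ y ∈ H, q (x, y) ∈ H) ∧
      IsLindelofSigma ↥H := by
  have hpc : Continuous p := by rw [hp]; fun_prop
  have hqc : Continuous q := by rw [hq]; fun_prop
  have hqp : ∀ x y, q (x, p (x, y)) = y := by
    intro x y
    have h1 : (φ.symm (x, y)).1 = x := by
      rw [← hπ, φ.apply_symm_apply]
    have h2 : (x, p (x, y)) = φ.symm (x, y) := by
      rw [hp]; exact Prod.ext h1.symm rfl
    rw [h2, hq]
    simp
  have hpq : ∀ x y, p (x, q (x, y)) = y := by
    intro x y
    have h2 : (x, q (x, y)) = φ (x, y) := by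
      rw [hq]; exact Prod.ext (hπ (x, y)).symm rfl
    rw [h2, hp]
    simp
  have hqe : ∀ x, q (x, x) = e := by
    intro x; rw [hq]; simp [hφ]
  have hL := hG.isLindelof_univ
  obtain ⟨Y, hY, hU⟩ := hG
  set S := genStep p q (Y ∪ {e}) with hS
  have hSL : ∀ n, IsLindelofSigma (S n) := by
    intro n
    induction n with
    | zero => exact hY.union_set (IsLindelofSigma.singleton_set e)
    | succ n ih =>
      exact ih.union_set (((ih.prod_set ih).image_set hpc).union_set
        ((ih.prod_set ih).image_set hqc))
  have hmono : Monotone S := monotone_nat_of_le_succ fun n => subset_union_left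
  by_cases hd : Dense (⋃ n, S n)
  · refine ⟨⋃ n, S n, hd, mem_iUnion.2 ⟨0, Or.inr rfl⟩, ?_, ?_, IsLindelofSigma.iUnion_set hSL⟩
    · intro x hx y hy
      obtain ⟨m, hm⟩ := mem_iUnion.1 hx
      obtain ⟨n, hn⟩ := mem_iUnion.1 hy
      exact mem_iUnion.2 ⟨max m n + 1, Or.inr (Or.inl ⟨(x, y),
        ⟨hmono (le_max_left m n) hm, hmono (le_max_right m n) hn⟩, rfl⟩)⟩
    · intro x hx y hy
      obtain ⟨m, hm⟩ := mem_iUnion.1 hx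
      obtain ⟨n, hn⟩ := mem_iUnion.1 hy
      exact mem_iUnion.2 ⟨max m n + 1, Or.inr (Or.inr ⟨(x, y),
        ⟨hmono (le_max_left m n) hm, hmono (le_max_right m n) hn⟩, rfl⟩)⟩
  · refine ⟨univ, dense_univ, mem_univ _, fun _ _ _ _ => mem_univ _,
      fun _ _ _ _ => mem_univ _, ?_⟩
    have hd' : ∃ a, a ∉ closure (⋃ n, S n) := by
      by_contra! h
      exact hd h
    obtain ⟨a, ha⟩ := hd'
    obtain ⟨C, hCa, hCc, hCd⟩ := exists_mem_nhds_isClosed_subset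
      (isClosed_closure.isOpen_compl.mem_nhds ha)
    have hCL : IsLindelofSigma C := by
      have := hU Cᶜ hCc.isOpen_compl (fun y hy hyC =>
        hCd hyC (subset_closure (mem_iUnion.2 ⟨0, Or.inl hy⟩)))
      rwa [compl_compl] at this
    -- translate `C` to every point
    let N : G → Set G := fun x => (fun z => p (x, q (a, z))) '' C
    have hNL : ∀ x, IsLindelofSigma (N x) := fun x => hCL.image_set (by fun_prop)
    have hN : ∀ x, N x ∈ nhds x := by
      intro x
      have hc : Continuous (fun w => p (a, q (x, w))) := by fun_prop
      have hx : p (a, q (x, x)) = a := by rw [hqe, ← hqe a, hpq]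
      have := hc.continuousAt.preimage_mem_nhds (x := x) (t := C) (by rwa [hx])
      refine Filter.mem_of_superset this fun w hw => ⟨_, hw, ?_⟩
      simp only [hqp, hpq]
    obtain ⟨t, ht, -, htc⟩ := hL.elim_nhds_subcover N (fun x _ => hN x)
    obtain ⟨s, hs⟩ := (ht.exists_eq_range (by
      obtain ⟨i, hi, -⟩ := mem_iUnion₂.1 (htc (mem_univ e))
      exact ⟨i, hi⟩))
    have : (univ : Set G) = ⋃ n : ℕ, N (s n) := by
      refine (Subset.antisymm (subset_univ _) ?_).symm
      rw [hs, biUnion_range] at htc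
      exact htc
    rw [this]
    exact IsLindelofSigma.iUnion_set fun n => hNL (s n)
end
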